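/- For every A > 0 and every ε > 0 there exists an integer N such that for all integers n ≥ N and all integers m with 1 ≤ m ≤ min{n, A·log n}, writing u = n/m and t = (log n)/m, one has | (1/u)·log( p_{n,m}/ρ(u) ) − log( t/(1 − e^{−t}) ) | ≤ ε. -/

import Mathlib

open Real

noncomputable section

/-- Predicate characterizing the Dickman function `ρ : [0,∞) → (0,∞)`:
continuous on `[0,∞)`, positive, equal to `1` on `[0,1]`, and satisfying the
delay differential equation `t·ρ'(t) + ρ(t-1) = 0` for `t > 1`. -/
def IsDickman (ρ : ℝ → ℝ) : Prop :=
  ContinuousOn ρ (Set.Ici 0) ∧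
  (∀ t : ℝ, 0 ≤ t → 0 < ρ t) ∧
  (∀ t ∈ Set.Icc (0:ℝ) 1, ρ t = 1) ∧
  (∀ t : ℝ, 1 < t → HasDerivAt ρ (-(ρ (t - 1)) / t) t)

/-- `ξ(u)`: for `u > 1`, the unique positive solution of `e^ξ = 1 + u·ξ`; otherwise `0`. -/
def xi (u : ℝ) : ℝ :=
  open Classical in
  if h : ∃ x : ℝ, 0 < x ∧ Real.exp x = 1 + u * x then h.choose else 0

/-- `p_{n,m}`: probability that a uniformly random permutation of `{1,…,n}` is `m`-friable,
i.e. has no cycle of length greater than `m`. -/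
def permProb (n m : ℕ) : ℝ :=
  (Nat.card {σ : Equiv.Perm (Fin n) // ∀ c ∈ σ.cycleType, c ≤ m} : ℝ) /
    (Nat.factorial n : ℝ)

/-- `p_{n,m,q}`: proportion of monic polynomials of degree `n` over a finite field `F`
(of cardinality `q`) that are `m`-friable, i.e. all of whose monic irreducible factors
have degree at most `m`. -/
def polyProb (F : Type) [Field F] [Fintype F] (n m : ℕ) : ℝ :=
  (Nat.card {f : Polynomial F // f.Monic ∧ f.natDegree = n ∧
      ∀ p : Polynomial F, p.Monic → Irreducible p → p ∣ f → p.natDegree ≤ m} : ℝ) /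
    (Fintype.card F : ℝ) ^ n

/-- `F_q(z) = ∏_{deg P ≤ m} (1 - (z/q)^{deg P})⁻¹`, the product over monic irreducible
polynomials `P` over `F` of degree at most `m`. -/
def FqFun (F : Type) [Field F] [Fintype F] (m : ℕ) (z : ℝ) : ℝ :=
  ∏ᶠ p ∈ {p : Polynomial F | p.Monic ∧ Irreducible p ∧ p.natDegree ≤ m},
    (1 - (z / (Fintype.card F : ℝ)) ^ p.natDegree)⁻¹

/-- `G_q(z) = F_q(z) · exp(-∑_{i=1}^m z^i/i)`. -/
def Gq (F : Type) [Field F] [Fintype F] (m : ℕ) (z : ℝ) : ℝ :=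
  FqFun F m z * Real.exp (-(∑ i ∈ Finset.Icc 1 m, z ^ i / (i : ℝ)))

/-- The coefficients `d_{m,i}`. -/
def dcoef (m i : ℕ) : ℝ :=
  if i = m then -(1 / (m : ℝ)) * ∑ j ∈ Finset.Icc 2 m, (1 : ℝ) / (j : ℝ)
  else Real.Gamma ((i : ℝ) + (i : ℝ) / (m : ℝ)) /
    (((m : ℝ) - (i : ℝ)) * (Nat.factorial i : ℝ) * Real.Gamma (1 + (i : ℝ) / (m : ℝ)))

/-- `T(s) = ∫₀^s ((e^t - 1)/t)·((t/m)/(1 - e^{-t/m}) - 1) dt`, integrand extended by `0` at `t = 0`. -/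
def Tfun (m : ℕ) (s : ℝ) : ℝ :=
  ∫ t in (0:ℝ)..s,
    if t = 0 then 0 else
      ((Real.exp t - 1) / t) * ((t / (m : ℝ)) / (1 - Real.exp (-t / (m : ℝ))) - 1)

end

/-!
Counting the points of a permutation by the length of their cycle gives
`n * p_{n,m} = ∑_{i ≤ m} p_{n-i,m}`, the discrete form of `v * ρ v = ∫_{v-1}^v ρ`. Let `Ψ` be the
antiderivative of `x ↦ log (a * x)` vanishing at `0`. Since `exp (-Ψ)` grows by a factor of about
`(a * v) ^ δ` from `v` to `v - δ`, it nearly solves the integral equation where `a * v = exp a`, and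
the recursion at `n = m * v` where `a * v * (1 - a / m) ^ m = 1`, which for
`a = m * (1 - exp (-s / m))` means `a * v = exp s`. With suitably perturbed `a` and `s` such
functions become sub- and supersolutions; comparison with them yields, for `u = n / m`,
`log (ρ u) / u = 1 - log u - log (log u) + o(1)` and `log p_{n,m} / u = 1 - log u - log φ + o(1)`,
where `φ = m * (1 - exp (-t))` and `t = log n / m`. As `m = O(log n)`, the ratio `log u / log n`
tends to `1`, so the difference of the two expansions is `log (log n / φ) + o(1)`, and
`log n / φ = t / (1 - exp (-t))`.
-/

section CycleStructure

open Finset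
open scoped Nat

/-- `z_s = ∏ᵢ i ^ kᵢ * kᵢ!`, where `kᵢ` is the multiplicity of `i` in `s`: the order of the
centralizer of a permutation whose cycle lengths, fixed points included, form `s`. -/
def centralizerOrder (s : Multiset ℕ) : ℕ :=
  s.prod * ∏ i ∈ s.toFinset, (s.count i)!

lemma centralizerOrder_cons (i : ℕ) (s : Multiset ℕ) :
    centralizerOrder (i ::ₘ s) = i * (s.count i + 1) * centralizerOrder s := by
  have hsub : ∏ j ∈ s.toFinset, (s.count j)! = ∏ j ∈ (i ::ₘ s).toFinset, (s.count j)! :=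
    prod_subset (by simp) fun j _ hj ↦ by
      rw [Multiset.count_eq_zero_of_notMem (by simpa using hj), Nat.factorial_zero]
  have hi : i ∈ (i ::ₘ s).toFinset := by simp
  have herase : ∏ j ∈ (i ::ₘ s).toFinset.erase i, ((i ::ₘ s).count j)! =
      ∏ j ∈ (i ::ₘ s).toFinset.erase i, (s.count j)! :=
    prod_congr rfl fun j hj ↦ by rw [Multiset.count_cons_of_ne (ne_of_mem_erase hj)]
  rw [centralizerOrder, centralizerOrder, hsub, ← mul_prod_erase _ _ hi, ← mul_prod_erase _ _ hi,
    herase, Multiset.count_cons_self, Nat.factorial_succ, Multiset.prod_cons]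
  ring

lemma centralizerOrder_pos {s : Multiset ℕ} (hs : ∀ i ∈ s, 0 < i) : 0 < centralizerOrder s :=
  Nat.mul_pos (Multiset.prod_pos hs) (prod_pos fun _ _ ↦ Nat.factorial_pos _)

lemma centralizerOrder_add_replicate_one {s : Multiset ℕ} (hs : 1 ∉ s) (k : ℕ) :
    centralizerOrder (s + Multiset.replicate k 1) = k ! * centralizerOrder s := by
  induction k with
  | zero => simp
  | succ k ih =>
    rw [Multiset.replicate_succ, Multiset.add_cons, centralizerOrder_cons, ih, Multiset.count_add,
      Multiset.count_eq_zero_of_notMem hs, Multiset.count_replicate_self, Nat.factorial_succ]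
    ring

lemma parts_eq_filter_two_le_add_replicate_one {n : ℕ} (l : n.Partition) :
    l.parts = l.parts.filter (2 ≤ ·) +
      Multiset.replicate (n - (l.parts.filter (2 ≤ ·)).sum) 1 := by
  have hones : ∀ i ∈ l.parts.filter (¬ 2 ≤ ·), i = 1 := fun i hi ↦ by
    have := l.parts_pos (Multiset.mem_of_mem_filter hi)
    have := Multiset.of_mem_filter hi
    omega
  have hsplit := Multiset.filter_add_not (2 ≤ ·) l.parts
  have hsum := l.parts_sum
  rw [Multiset.eq_replicate_card.2 hones] at hsplit
  rw [← hsplit, Multiset.sum_add, Multiset.sum_replicate, smul_eq_mul, mul_one] at hsum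
  conv_lhs => rw [← hsplit]
  congr 2
  omega

section Perm

variable {α : Type*} [Fintype α] [DecidableEq α]

lemma exists_perm_partition_eq (l : (Fintype.card α).Partition) :
    ∃ σ : Equiv.Perm α, σ.partition = l := by
  have hl := parts_eq_filter_two_le_add_replicate_one l
  have hsum : (l.parts.filter (2 ≤ ·)).sum ≤ Fintype.card α := by
    have := congrArg Multiset.sum hl
    rw [l.parts_sum, Multiset.sum_add] at this
    omega
  obtain ⟨σ, hσ⟩ := (Equiv.Perm.exists_with_cycleType_iff α).2
    ⟨hsum, fun _ ha ↦ Multiset.of_mem_filter ha⟩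
  refine ⟨σ, Nat.Partition.ext ?_⟩
  rw [Equiv.Perm.parts_partition, ← Equiv.Perm.sum_cycleType, hσ, ← hl]

lemma card_filter_partition_eq_mul_centralizerOrder (l : (Fintype.card α).Partition) :
    #{σ : Equiv.Perm α | σ.partition = l} * centralizerOrder l.parts = (Fintype.card α)! := by
  obtain ⟨τ, rfl⟩ := exists_perm_partition_eq l
  have hone : 1 ∉ τ.cycleType := fun h ↦ absurd (Equiv.Perm.two_le_of_mem_cycleType h) (by simp)
  have hclass : #{σ : Equiv.Perm α | σ.partition = τ.partition} =
      Nat.card {σ : Equiv.Perm α | IsConj τ σ} := by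
    rw [Nat.card_eq_card_toFinset]
    congr 1
    ext σ
    simp only [mem_filter_univ, Set.mem_toFinset, Set.mem_ofPred_eq,
      Equiv.Perm.partition_eq_of_isConj, eq_comm]
  rw [hclass, ← τ.card_isConj_mul_eq, Equiv.Perm.parts_partition, ← Equiv.Perm.sum_cycleType,
    centralizerOrder_add_replicate_one hone, centralizerOrder, mul_assoc (_)!]

lemma forall_mem_cycleType_le_iff {m : ℕ} (hm : 1 ≤ m) (σ : Equiv.Perm α) :
    (∀ c ∈ σ.cycleType, c ≤ m) ↔ ∀ i ∈ σ.partition.parts, i ≤ m := by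
  simp only [Equiv.Perm.parts_partition, Multiset.mem_add, Multiset.mem_replicate]
  grind

lemma card_perm_cycleType_le {m : ℕ} (hm : 1 ≤ m) :
    (Nat.card {σ : Equiv.Perm α // ∀ c ∈ σ.cycleType, c ≤ m} : ℝ) =
      (Fintype.card α)! * ∑ l ∈ Nat.Partition.restricted (Fintype.card α) (· ≤ m),
        (centralizerOrder l.parts : ℝ)⁻¹ := by
  have hmaps : ∀ σ ∈ ({σ | ∀ c ∈ σ.cycleType, c ≤ m} : Finset (Equiv.Perm α)),
      σ.partition ∈ Nat.Partition.restricted (Fintype.card α) (· ≤ m) := fun σ hσ ↦ by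
    simpa [Nat.Partition.restricted, forall_mem_cycleType_le_iff hm] using hσ
  rw [Nat.card_eq_fintype_card, Fintype.card_subtype, card_eq_sum_card_fiberwise hmaps,
    Nat.cast_sum, mul_sum]
  refine sum_congr rfl fun l hl ↦ ?_
  have hfiber : ({σ | ∀ c ∈ σ.cycleType, c ≤ m} : Finset (Equiv.Perm α)).filter
      (fun σ ↦ σ.partition = l) = ({σ | σ.partition = l} : Finset (Equiv.Perm α)) := by
    ext σ
    simp only [mem_filter, mem_univ, true_and, and_iff_right_iff_imp,
      forall_mem_cycleType_le_iff hm]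
    rintro rfl
    exact (mem_filter.1 hl).2
  have hz : (centralizerOrder l.parts : ℝ) ≠ 0 :=
    mod_cast (centralizerOrder_pos fun _ hi ↦ l.parts_pos hi).ne'
  rw [hfiber, eq_mul_inv_iff_mul_eq₀ hz]
  exact_mod_cast card_filter_partition_eq_mul_centralizerOrder l

end Perm

lemma permProb_eq_sum_partition (n : ℕ) {m : ℕ} (hm : 1 ≤ m) :
    permProb n m =
      ∑ l ∈ Nat.Partition.restricted n (· ≤ m), (centralizerOrder l.parts : ℝ)⁻¹ := by
  have h := card_perm_cycleType_le (α := Fin n) hm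
  rw [Fintype.card_fin] at h
  rw [permProb, h, mul_div_cancel_left₀ _ (by positivity)]

lemma sum_count_mul_div_centralizerOrder {m n i : ℕ} (hi : 1 ≤ i) (him : i ≤ m) (hin : i ≤ n) :
    ∑ l ∈ Nat.Partition.restricted n (· ≤ m),
        (l.parts.count i * i : ℝ) / centralizerOrder l.parts =
      ∑ l ∈ Nat.Partition.restricted (n - i) (· ≤ m), (centralizerOrder l.parts : ℝ)⁻¹ := by
  have hzero : ∀ l ∈ Nat.Partition.restricted n (· ≤ m),
      (l.parts.count i * i : ℝ) / centralizerOrder l.parts ≠ 0 → i ∈ l.parts := fun l _ h ↦ by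
    contrapose! h
    simp [Multiset.count_eq_zero_of_notMem h]
  rw [← sum_filter_of_ne hzero]
  symm
  refine sum_bij (fun l _ ↦ ((Nat.Partition.partitionWithPartEquiv hi hin).symm l).1) ?_ ?_ ?_ ?_
  · intro l hl
    simpa [Nat.Partition.restricted, him] using hl
  · intro l _ l' _ h
    exact (Nat.Partition.partitionWithPartEquiv hi hin).symm.injective (Subtype.ext h)
  · intro l hl
    rw [mem_filter] at hl
    refine ⟨Nat.Partition.partitionWithPartEquiv hi hin ⟨l, hl.2⟩, ?_, by simp⟩
    have := hl.1
    simp only [Nat.Partition.restricted, mem_filter, mem_univ, true_and,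
      Nat.Partition.partitionWithPartEquiv_apply_parts] at this ⊢
    exact fun j hj ↦ this j (Multiset.mem_of_mem_erase hj)
  · intro l _
    have hz : (centralizerOrder l.parts : ℝ) ≠ 0 :=
      mod_cast (centralizerOrder_pos fun _ hj ↦ l.parts_pos hj).ne'
    have hi0 : (i : ℝ) ≠ 0 := mod_cast (Nat.one_le_iff_ne_zero.1 hi)
    rw [Nat.Partition.partitionWithPartEquiv_symm_apply_parts, centralizerOrder_cons,
      Multiset.count_cons_self]
    push_cast
    field_simp

lemma sum_Icc_count_mul {m n : ℕ} {l : n.Partition}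
    (hl : l ∈ Nat.Partition.restricted n (· ≤ m)) :
    ∑ i ∈ Icc 1 m, l.parts.count i * i = n := by
  have hsub : l.parts.toFinset ⊆ Icc 1 m := fun i hi ↦ by
    rw [Multiset.mem_toFinset] at hi
    exact mem_Icc.2 ⟨l.parts_pos hi, (mem_filter.1 hl).2 i hi⟩
  simp only [← smul_eq_mul]
  rw [← sum_multiset_count_of_subset l.parts _ hsub, l.parts_sum]

theorem mul_permProb_eq_sum {m n : ℕ} (hm : 1 ≤ m) (hmn : m ≤ n) :
    (n : ℝ) * permProb n m = ∑ i ∈ Icc 1 m, permProb (n - i) m := by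
  simp only [permProb_eq_sum_partition _ hm]
  calc (n : ℝ) * ∑ l ∈ Nat.Partition.restricted n (· ≤ m), (centralizerOrder l.parts : ℝ)⁻¹
      = ∑ l ∈ Nat.Partition.restricted n (· ≤ m), ∑ i ∈ Icc 1 m,
          (l.parts.count i * i : ℝ) / centralizerOrder l.parts := by
        rw [mul_sum]
        refine sum_congr rfl fun l hl ↦ ?_
        rw [← sum_div, div_eq_mul_inv]
        exact_mod_cast congrArg (fun k : ℕ ↦ (k : ℝ) * _) (sum_Icc_count_mul hl).symm
    _ = _ := by
        rw [sum_comm]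
        refine sum_congr rfl fun i hi ↦ ?_
        rw [mem_Icc] at hi
        exact sum_count_mul_div_centralizerOrder hi.1 hi.2 (hi.2.trans hmn)

end CycleStructure

lemma permProb_pos (n m : ℕ) : 0 < permProb n m := by
  have : Nonempty {σ : Equiv.Perm (Fin n) // ∀ c ∈ σ.cycleType, c ≤ m} := ⟨1, by simp⟩
  exact div_pos (mod_cast Nat.card_pos) (mod_cast n.factorial_pos)

lemma permProb_le_one (n m : ℕ) : permProb n m ≤ 1 := by
  rw [permProb, div_le_one (by positivity), Nat.cast_le]
  calc _ ≤ Nat.card (Equiv.Perm (Fin n)) := Finite.card_subtype_le _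
    _ = n.factorial := by rw [Nat.card_eq_fintype_card, Fintype.card_perm, Fintype.card_fin]

lemma permProb_eq_one {n m : ℕ} (hnm : n ≤ m) : permProb n m = 1 := by
  have hall (σ : Equiv.Perm (Fin n)) : ∀ c ∈ σ.cycleType, c ≤ m := fun c hc ↦
    calc c ≤ σ.support.card := Equiv.Perm.le_card_support_of_mem_cycleType hc
      _ ≤ Fintype.card (Fin n) := σ.support.card_le_univ
      _ ≤ m := by rwa [Fintype.card_fin]
  rw [permProb, Nat.card_congr (Equiv.subtypeUnivEquiv hall), Nat.card_eq_fintype_card,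
    Fintype.card_perm, Fintype.card_fin]
  exact div_self (by positivity)

section Profiles

variable {a v v₀ δ : ℝ}

/-- `x ↦ x * (log (a * x) - 1)`, the antiderivative of `x ↦ log (a * x)` vanishing at `0`. At
`x = u` and for `a` close to `log u`, it approximates `-log (ρ u)`. -/
noncomputable def logPrimitive (a x : ℝ) : ℝ := x * (log (a * x) - 1)

lemma logPrimitive_zero_right (a : ℝ) : logPrimitive a 0 = 0 := zero_mul _

lemma continuous_logPrimitive (ha : a ≠ 0) : Continuous (logPrimitive a) := by
  have h : logPrimitive a = fun x ↦ a⁻¹ * (a * x * log (a * x)) - x := by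
    ext x
    rw [logPrimitive]
    field_simp
  rw [h]
  exact (continuous_const.mul (continuous_mul_log.comp (continuous_const.mul continuous_id))).sub
    continuous_id

lemma log_mul_sub_le_logPrimitive_sub {x y : ℝ} (ha : 0 < a) (hx : 0 < x) (hy : 0 < y) :
    log (a * x) * (y - x) ≤ logPrimitive a y - logPrimitive a x := by
  have h : y * (log x - log y) ≤ x - y := by
    rw [← log_div hx.ne' hy.ne']
    calc y * log (x / y) ≤ y * (x / y - 1) := by
          gcongr
          exact log_le_sub_one_of_pos (by positivity)
      _ = x - y := by field_simp
  rw [logPrimitive, logPrimitive, log_mul ha.ne' hx.ne', log_mul ha.ne' hy.ne']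
  linarith

lemma logPrimitive_sub_le_log_mul_sub {x y : ℝ} (ha : 0 < a) (hx : 0 < x) (hy : 0 < y) :
    logPrimitive a y - logPrimitive a x ≤ log (a * y) * (y - x) := by
  linarith [log_mul_sub_le_logPrimitive_sub ha hy hx]

/-- A function which is below the friable densities as soon as `(1 + a * u) * exp (-a) ≤ 1`: it
loses at most a factor `a * v + 1` on each interval `[v - 1, v]`. The shift by `1 + 1 / a` keeps
`a * x ≥ a * v + 1` for the arguments `x` which `logPrimitive a` meets on that interval. -/
noncomputable def dickmanMinorant (a v : ℝ) : ℝ :=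
  exp (logPrimitive a (1 + 1 / a) - logPrimitive a (v + (1 + 1 / a)))

/-- A function which is above the friable densities as soon as `1 ≤ a * v₀ * exp (-a)`: beyond
`v₀` it loses a factor of at least `a * (v - 1)` on each interval `[v - 1, v]`. -/
noncomputable def dickmanMajorant (a v₀ v : ℝ) : ℝ := exp (logPrimitive a v₀ - logPrimitive a v)

lemma dickmanMinorant_pos (a v : ℝ) : 0 < dickmanMinorant a v := exp_pos _

lemma dickmanMajorant_pos (a v₀ v : ℝ) : 0 < dickmanMajorant a v₀ v := exp_pos _

lemma continuous_dickmanMajorant (ha : a ≠ 0) : Continuous (dickmanMajorant a v₀) :=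
  continuous_exp.comp (continuous_const.sub (continuous_logPrimitive ha))

lemma continuous_dickmanMinorant (ha : a ≠ 0) : Continuous (dickmanMinorant a) :=
  continuous_exp.comp (continuous_const.sub
    ((continuous_logPrimitive ha).comp (continuous_id.add continuous_const)))

lemma dickmanMinorant_le_one (ha : 0 < a) (hv : 0 ≤ v) : dickmanMinorant a v ≤ 1 := by
  have hβ : 0 < 1 + 1 / a := by positivity
  have h := log_mul_sub_le_logPrimitive_sub ha hβ (by positivity : 0 < v + (1 + 1 / a))
  have hlog : 0 ≤ log (a * (1 + 1 / a)) := by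
    rw [mul_add, mul_one_div_cancel ha.ne']
    exact log_nonneg (by linarith)
  rw [dickmanMinorant, exp_le_one_iff]
  nlinarith

lemma dickmanMinorant_mul_rpow_le (ha : 0 < a) (hv : 0 ≤ v) (hδ₀ : 0 ≤ δ) (hδ₁ : δ ≤ 1) :
    dickmanMinorant a v * (a * v + 1) ^ δ ≤ dickmanMinorant a (v - δ) := by
  have hβ : 0 < 1 / a := by positivity
  have hx : 0 < v - δ + (1 + 1 / a) := by linarith
  have htangent := log_mul_sub_le_logPrimitive_sub ha hx (by linarith : 0 < v + (1 + 1 / a))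
  have hlog : log (a * v + 1) ≤ log (a * (v - δ + (1 + 1 / a))) := by
    have hbase : a * (v - δ + (1 + 1 / a)) = a * v + 1 + a * (1 - δ) := by
      field_simp
      ring
    exact log_le_log (by positivity) (by rw [hbase]; nlinarith)
  rw [rpow_def_of_pos (by positivity), dickmanMinorant, dickmanMinorant, ← exp_add, exp_le_exp]
  linarith [mul_le_mul_of_nonneg_right hlog hδ₀]

lemma one_le_dickmanMajorant (ha : 0 < a) (hv : 0 ≤ v) (hv₀ : v ≤ v₀) (he : exp 1 ≤ a * v₀) :
    1 ≤ dickmanMajorant a v₀ v := by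
  rw [dickmanMajorant, one_le_exp_iff, sub_nonneg]
  have hlog : 1 ≤ log (a * v₀) := by
    rwa [le_log_iff_exp_le (by linarith [exp_pos 1])]
  rcases hv.eq_or_lt with rfl | hv
  · rw [logPrimitive_zero_right]
    exact mul_nonneg hv₀ (by linarith)
  · calc v * (log (a * v) - 1) ≤ v * (log (a * v₀) - 1) := by gcongr
      _ ≤ v₀ * (log (a * v₀) - 1) := by gcongr

lemma dickmanMajorant_sub_le (ha : 0 < a) (hδ : 0 ≤ δ) (hδv : δ < v) :
    dickmanMajorant a v₀ (v - δ) ≤ dickmanMajorant a v₀ v * (a * v) ^ δ := by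
  have hv : 0 < v := hδ.trans_lt hδv
  have h := logPrimitive_sub_le_log_mul_sub ha (sub_pos.2 hδv) hv
  rw [rpow_def_of_pos (by positivity), dickmanMajorant, dickmanMajorant, ← exp_add, exp_le_exp]
  linarith [h]

end Profiles

section Recursion

open Finset

variable {m n k : ℕ} {a v₀ : ℝ}

lemma sum_Icc_pow_mul_sub_one (x : ℝ) (m : ℕ) :
    (∑ i ∈ Icc 1 m, x ^ i) * (x - 1) = x * (x ^ m - 1) := by
  rw [← Ico_add_one_right_eq_Icc, geom_sum_Ico_mul x (by omega)]
  ring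

lemma le_sum_pow_of_mul_le_one {w x : ℝ} (m : ℕ) (hw : 0 < w) (hx : 1 < x)
    (h : x * (1 - w) ≤ 1) : (x ^ m - 1) / w ≤ ∑ i ∈ Icc 1 m, x ^ i := by
  have hpow : 0 ≤ x ^ m - 1 := sub_nonneg.2 (one_le_pow₀ hx.le)
  rw [div_le_iff₀ hw, ← mul_le_mul_iff_left₀ (sub_pos.2 hx), mul_right_comm,
    sum_Icc_pow_mul_sub_one]
  nlinarith

lemma sum_pow_le_of_one_le_mul {w x : ℝ} (m : ℕ) (hw : 0 < w) (hx : 1 < x)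
    (h : 1 ≤ x * (1 - w)) : ∑ i ∈ Icc 1 m, x ^ i ≤ (x ^ m - 1) / w := by
  have hpow : 0 ≤ x ^ m - 1 := sub_nonneg.2 (one_le_pow₀ hx.le)
  rw [le_div_iff₀ hw, ← mul_le_mul_iff_left₀ (sub_pos.2 hx), mul_right_comm,
    sum_Icc_pow_mul_sub_one]
  nlinarith

theorem le_permProb_of_subsolution {f : ℕ → ℝ} (hm : 1 ≤ m) (hinit : ∀ k ≤ m, f k ≤ 1)
    (hrec : ∀ k, m < k → k ≤ n → k * f k ≤ ∑ i ∈ Icc 1 m, f (k - i)) (hk : k ≤ n) :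
    f k ≤ permProb k m := by
  induction k using Nat.strong_induction_on with
  | _ k ih =>
    rcases le_or_gt k m with hkm | hkm
    · exact permProb_eq_one hkm ▸ hinit k hkm
    · have hk₀ : (0 : ℝ) < k := mod_cast hm.trans hkm.le
      rw [← mul_le_mul_iff_right₀ hk₀, mul_permProb_eq_sum hm hkm.le]
      refine (hrec k hkm hk).trans (sum_le_sum fun i hi ↦ ?_)
      rw [mem_Icc] at hi
      exact ih _ (by omega) (by omega)

theorem permProb_le_of_supersolution {f : ℕ → ℝ} {K : ℝ} (hm : 1 ≤ m) (hK : m ≤ K)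
    (hinit : ∀ k : ℕ, k ≤ K → 1 ≤ f k)
    (hrec : ∀ k : ℕ, K < k → ∑ i ∈ Icc 1 m, f (k - i) ≤ k * f k) (k : ℕ) :
    permProb k m ≤ f k := by
  induction k using Nat.strong_induction_on with
  | _ k ih =>
    rcases le_or_gt (k : ℝ) K with hkK | hkK
    · exact (permProb_le_one k m).trans (hinit k hkK)
    · have hmk : m < k := mod_cast hK.trans_lt hkK
      have hk₀ : (0 : ℝ) < k := mod_cast hm.trans hmk.le
      rw [← mul_le_mul_iff_right₀ hk₀, mul_permProb_eq_sum hm hmk.le]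
      refine (sum_le_sum fun i hi ↦ ?_).trans (hrec k hkK)
      rw [mem_Icc] at hi
      exact ih _ (by omega)

lemma mul_dickmanMinorant_le_sum (hm : 1 ≤ m) (hmk : m ≤ k) (ha : 0 < a) (ham : a ≤ m)
    (h : (1 - a / m) ^ m * (a * (k / m) + 1) ≤ 1) :
    k * dickmanMinorant a (k / m) ≤ ∑ i ∈ Icc 1 m, dickmanMinorant a ((k - i : ℕ) / m) := by
  have hm₀ : (0 : ℝ) < m := mod_cast hm
  have hk₀ : (0 : ℝ) < k := mod_cast hm.trans hmk
  have hbase : 1 < a * (k / m) + 1 := lt_add_of_pos_left _ (by positivity)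
  set x := (a * (k / m) + 1) ^ (m : ℝ)⁻¹ with hx
  have hx₁ : 1 < x := one_lt_rpow hbase (by positivity)
  have hxm : x ^ m = a * (k / m) + 1 := rpow_inv_natCast_pow (by linarith) (by omega)
  have hw : 0 ≤ 1 - a / m := sub_nonneg.2 ((div_le_one hm₀).2 ham)
  have hxw : x * (1 - a / m) ≤ 1 := by
    rwa [← pow_le_one_iff_of_nonneg (by positivity) (by omega : m ≠ 0), mul_pow, hxm, mul_comm]
  calc k * dickmanMinorant a (k / m)
      = dickmanMinorant a (k / m) * ((x ^ m - 1) / (a / m)) := by rw [hxm]; field_simp; ring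
    _ ≤ dickmanMinorant a (k / m) * ∑ i ∈ Icc 1 m, x ^ i := by
        gcongr
        · exact (dickmanMinorant_pos _ _).le
        · exact le_sum_pow_of_mul_le_one m (by positivity) hx₁ hxw
    _ ≤ ∑ i ∈ Icc 1 m, dickmanMinorant a ((k - i : ℕ) / m) := by
        rw [mul_sum]
        refine sum_le_sum fun i hi ↦ ?_
        rw [mem_Icc] at hi
        rw [hx, ← rpow_mul_natCast (by linarith), inv_mul_eq_div, Nat.cast_sub (by omega), sub_div]
        exact dickmanMinorant_mul_rpow_le ha (by positivity) (by positivity)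
          ((div_le_one hm₀).2 (mod_cast hi.2))

theorem dickmanMinorant_le_permProb (hm : 1 ≤ m) (ha : 0 < a) (ham : a ≤ m)
    (h : (1 - a / m) ^ m * (a * (n / m) + 1) ≤ 1) :
    dickmanMinorant a (n / m) ≤ permProb n m := by
  have hw : 0 ≤ 1 - a / m := sub_nonneg.2 ((div_le_one (mod_cast hm)).2 ham)
  refine le_permProb_of_subsolution (f := fun k ↦ dickmanMinorant a (k / m)) hm
    (fun k _ ↦ dickmanMinorant_le_one ha (by positivity)) (fun k hmk hkn ↦ ?_) le_rfl
  exact mul_dickmanMinorant_le_sum hm hmk.le ha ham (h.trans' (by gcongr))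

lemma sum_dickmanMajorant_le_mul (hm : 1 ≤ m) (hmk : m < k) (ha : 0 < a) (ham : a ≤ m)
    (hak : 1 < a * (k / m)) (h : 1 ≤ (1 - a / m) ^ m * (a * (k / m))) :
    ∑ i ∈ Icc 1 m, dickmanMajorant a v₀ ((k - i : ℕ) / m) ≤ k * dickmanMajorant a v₀ (k / m) := by
  have hm₀ : (0 : ℝ) < m := mod_cast hm
  set x := (a * (k / m)) ^ (m : ℝ)⁻¹ with hx
  have hx₁ : 1 < x := one_lt_rpow hak (by positivity)
  have hxm : x ^ m = a * (k / m) := rpow_inv_natCast_pow (by linarith) (by omega)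
  have hw : 0 ≤ 1 - a / m := sub_nonneg.2 ((div_le_one hm₀).2 ham)
  have hxw : 1 ≤ x * (1 - a / m) := by
    rwa [← one_le_pow_iff_of_nonneg (by positivity) (by omega : m ≠ 0), mul_pow, hxm, mul_comm]
  calc ∑ i ∈ Icc 1 m, dickmanMajorant a v₀ ((k - i : ℕ) / m)
      ≤ dickmanMajorant a v₀ (k / m) * ∑ i ∈ Icc 1 m, x ^ i := by
        rw [mul_sum]
        refine sum_le_sum fun i hi ↦ ?_
        rw [mem_Icc] at hi
        rw [hx, ← rpow_mul_natCast (by linarith), inv_mul_eq_div, Nat.cast_sub (by omega), sub_div]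
        exact dickmanMajorant_sub_le ha (by positivity) (by gcongr; omega)
    _ ≤ dickmanMajorant a v₀ (k / m) * ((x ^ m - 1) / (a / m)) := by
        gcongr
        · exact (dickmanMajorant_pos _ _ _).le
        · exact sum_pow_le_of_one_le_mul m (by positivity) hx₁ hxw
    _ ≤ dickmanMajorant a v₀ (k / m) * (x ^ m / (a / m)) := by
        gcongr
        · exact (dickmanMajorant_pos _ _ _).le
        · exact sub_le_self _ zero_le_one
    _ = k * dickmanMajorant a v₀ (k / m) := by rw [hxm]; field_simp

theorem permProb_le_dickmanMajorant (hm : 1 ≤ m) (ha : 0 < a) (ham : a ≤ m) (hv₀ : 1 ≤ v₀)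
    (he : exp 1 ≤ a * v₀) (h : 1 ≤ (1 - a / m) ^ m * (a * v₀)) (n : ℕ) :
    permProb n m ≤ dickmanMajorant a v₀ (n / m) := by
  have hm₀ : (0 : ℝ) < m := mod_cast hm
  have hw : 0 ≤ 1 - a / m := sub_nonneg.2 ((div_le_one hm₀).2 ham)
  have hK : m ≤ v₀ * m := le_mul_of_one_le_left hm₀.le hv₀
  refine permProb_le_of_supersolution (f := fun k ↦ dickmanMajorant a v₀ (k / m)) hm hK
    (fun k hk ↦ one_le_dickmanMajorant ha (by positivity) ((div_le_iff₀ hm₀).2 hk) he)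
    (fun k hk ↦ ?_) n
  have hak : a * v₀ ≤ a * (k / m) := by gcongr; exact ((lt_div_iff₀ hm₀).2 hk).le
  refine sum_dickmanMajorant_le_mul hm (mod_cast hK.trans_lt hk) ha ham ?_ (h.trans (by gcongr))
  linarith [add_one_lt_exp one_ne_zero]

end Recursion

section Dickman

open Set intervalIntegral

variable {ρ : ℝ → ℝ} {a u v v₀ : ℝ}

theorem IsDickman.mul_eq_integral (hρ : IsDickman ρ) (hv : 1 ≤ v) :
    v * ρ v = ∫ s in (v - 1)..v, ρ s := by
  obtain ⟨hcont, -, hone, hderiv⟩ := hρ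
  have hint {x y : ℝ} (hx : 0 ≤ x) (hy : 0 ≤ y) : IntervalIntegrable ρ MeasureTheory.volume x y :=
    (hcont.mono fun _ hs ↦ (le_min hx hy).trans hs.1).intervalIntegrable
  have hshift : IntervalIntegrable (fun s ↦ ρ (s - 1)) MeasureTheory.volume 1 v := by
    simpa using (hint le_rfl (sub_nonneg.2 hv)).comp_sub_right 1
  have hFTC : ∫ s in (1 : ℝ)..v, (ρ s - ρ (s - 1)) = v * ρ v - 1 * ρ 1 := by
    refine integral_eq_sub_of_hasDerivAt_of_le hv
      (continuousOn_id.mul (hcont.mono fun s hs ↦ zero_le_one.trans hs.1)) (fun s hs ↦ ?_)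
      ((hint zero_le_one (by linarith)).sub hshift)
    have hs₀ : s ≠ 0 := (zero_lt_one.trans hs.1).ne'
    refine ((hasDerivAt_id s).mul (hderiv s hs.1)).congr_deriv ?_
    simp only [id]
    field_simp
    ring
  have hunit : ∫ s in (0 : ℝ)..1, ρ s = 1 := by
    rw [integral_congr (g := fun _ ↦ 1) fun s hs ↦ hone s (by rwa [uIcc_of_le zero_le_one] at hs)]
    simp
  rw [integral_sub (hint zero_le_one (by linarith)) hshift, integral_comp_sub_right, sub_self,
    hone 1 ⟨zero_le_one, le_rfl⟩] at hFTC
  have h₁ := integral_add_adjacent_intervals (hint le_rfl zero_le_one)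
    (hint zero_le_one (zero_le_one.trans hv))
  have h₂ := integral_add_adjacent_intervals (hint le_rfl (sub_nonneg.2 hv))
    (hint (sub_nonneg.2 hv) (zero_le_one.trans hv))
  linarith

lemma IsDickman.le_one (hρ : IsDickman ρ) (hv : 0 ≤ v) : ρ v ≤ 1 := by
  obtain ⟨hcont, hpos, hone, hderiv⟩ := hρ
  have hanti : AntitoneOn ρ (Ici 1) := by
    refine antitoneOn_of_deriv_nonpos (convex_Ici 1) (hcont.mono (Ici_subset_Ici.2 zero_le_one))
      (fun s hs ↦ ?_) (fun s hs ↦ ?_) <;> rw [interior_Ici, mem_Ioi] at hs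
    · exact (hderiv s hs).differentiableAt.differentiableWithinAt
    · have := hpos (s - 1) (by linarith)
      rw [(hderiv s hs).deriv, neg_div, neg_nonpos]
      positivity
  rcases le_total v 1 with h | h
  · exact (hone v ⟨hv, h⟩).le
  · exact hone 1 ⟨zero_le_one, le_rfl⟩ ▸ hanti self_mem_Ici h h

theorem le_of_forall_mul_integral_lt {f g : ℝ → ℝ} (hv₀ : 1 ≤ v₀) (hf : ContinuousOn f (Icc 0 u))
    (hg : ContinuousOn g (Icc 0 u)) (hpos : ∀ v ∈ Icc 0 u, 0 < g v)
    (hinit : ∀ v ∈ Icc 0 v₀, f v ≤ g v)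
    (hstep : ∀ v ∈ Ioc v₀ u,
      f v * ∫ s in (v - 1)..v, g s < g v * ∫ s in (v - 1)..v, f s)
    (hv : v ∈ Icc 0 u) : f v ≤ g v := by
  -- At a maximum of `f / g` beyond `v₀`, averaging `f / g` would contradict `hstep`.
  obtain ⟨x, hx, hmax⟩ := isCompact_Icc.exists_isMaxOn ⟨v, hv⟩
    (hf.div hg fun v hv ↦ (hpos v hv).ne')
  have hratio : ∀ s ∈ Icc 0 u, f s ≤ f x / g x * g s := fun s hs ↦
    (div_le_iff₀ (hpos s hs)).1 (hmax hs)
  have hxv₀ : x ≤ v₀ := by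
    by_contra! hlt
    have hsub : uIcc (x - 1) x ⊆ Icc 0 u := by
      rw [uIcc_of_le (by linarith)]
      exact Icc_subset_Icc (by linarith) hx.2
    have hint : ∫ s in (x - 1)..x, f s ≤ f x / g x * ∫ s in (x - 1)..x, g s := by
      rw [← integral_const_mul]
      exact integral_mono_on (by linarith) (hf.mono hsub).intervalIntegrable
        ((hg.mono hsub).intervalIntegrable.const_mul _)
        fun s hs ↦ hratio s (hsub (Icc_subset_uIcc hs))
    have hgx := hpos x hx
    refine (hstep x ⟨hlt, hx.2⟩).not_ge ?_
    calc g x * ∫ s in (x - 1)..x, f s ≤ g x * (f x / g x * ∫ s in (x - 1)..x, g s) := by gcongr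
      _ = f x * ∫ s in (x - 1)..x, g s := by field_simp
  calc f v ≤ f x / g x * g v := hratio v hv
    _ ≤ 1 * g v := by
      gcongr
      · exact (hpos v hv).le
      · exact div_le_one_of_le₀ (hinit x ⟨hx.1, hxv₀⟩) (hpos x hx).le
    _ = g v := one_mul _

lemma integral_rpow_sub {c : ℝ} (hc : 1 < c) (v : ℝ) :
    ∫ s in (v - 1)..v, c ^ (v - s) = (c - 1) / log c := by
  have hlog : log c ≠ 0 := (log_pos hc).ne'
  rw [integral_comp_sub_left (fun s ↦ c ^ s), sub_self, sub_sub_cancel]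
  simp only [rpow_def_of_pos (zero_lt_one.trans hc)]
  rw [integral_comp_mul_left exp hlog, integral_exp]
  simp [exp_log (zero_lt_one.trans hc), inv_mul_eq_div]

lemma mul_dickmanMinorant_lt_integral (ha : 0 < a) (hv : 1 ≤ v) (h : a * v + 1 < exp a) :
    v * dickmanMinorant a v < ∫ s in (v - 1)..v, dickmanMinorant a s := by
  have hav : 0 < a * v := by positivity
  have hlog : 0 < log (a * v + 1) := log_pos (by linarith)
  have hlog_lt : log (a * v + 1) < a := (log_lt_iff_lt_exp (by linarith)).2 h
  calc v * dickmanMinorant a v < dickmanMinorant a v * ((a * v + 1 - 1) / log (a * v + 1)) := by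
        rw [mul_comm, mul_lt_mul_iff_right₀ (dickmanMinorant_pos _ _), lt_div_iff₀ hlog]
        nlinarith
    _ = ∫ s in (v - 1)..v, dickmanMinorant a v * (a * v + 1) ^ (v - s) := by
        rw [integral_const_mul, integral_rpow_sub (by linarith)]
    _ ≤ ∫ s in (v - 1)..v, dickmanMinorant a s := by
        refine integral_mono_on (by linarith) ?_
          ((continuous_dickmanMinorant ha.ne').intervalIntegrable _ _) fun s hs ↦ ?_
        · refine Continuous.intervalIntegrable (continuous_const.mul ?_) _ _
          exact continuous_const.rpow (continuous_sub_left v) fun _ ↦ .inl (by linarith)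
        · simpa using dickmanMinorant_mul_rpow_le ha (v := v) (by linarith)
            (sub_nonneg.2 hs.2) (by linarith [hs.1])

lemma integral_dickmanMajorant_lt_mul (ha : 0 < a) (hv : 1 < v) (h : exp a ≤ a * v) :
    ∫ s in (v - 1)..v, dickmanMajorant a v₀ s < v * dickmanMajorant a v₀ v := by
  have hav : 1 < a * v := (one_lt_exp_iff.2 ha).trans_le h
  have hlog : a ≤ log (a * v) := (le_log_iff_exp_le (by linarith)).2 h
  calc ∫ s in (v - 1)..v, dickmanMajorant a v₀ s
      ≤ ∫ s in (v - 1)..v, dickmanMajorant a v₀ v * (a * v) ^ (v - s) := by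
        refine integral_mono_on (by linarith)
          ((continuous_dickmanMajorant ha.ne').intervalIntegrable _ _) ?_ fun s hs ↦ ?_
        · refine Continuous.intervalIntegrable (continuous_const.mul ?_) _ _
          exact continuous_const.rpow (continuous_sub_left v) fun _ ↦ .inl (by linarith)
        · simpa using dickmanMajorant_sub_le ha (v := v) (sub_nonneg.2 hs.2) (by linarith [hs.1])
    _ = dickmanMajorant a v₀ v * ((a * v - 1) / log (a * v)) := by
        rw [integral_const_mul, integral_rpow_sub hav]
    _ < v * dickmanMajorant a v₀ v := by
        rw [mul_comm v, mul_lt_mul_iff_right₀ (dickmanMajorant_pos _ _ _),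
          div_lt_iff₀ (ha.trans_le hlog)]
        nlinarith

theorem IsDickman.dickmanMinorant_le (hρ : IsDickman ρ) (ha : 0 < a) (hu : 0 ≤ u)
    (h : a * u + 1 < exp a) : dickmanMinorant a u ≤ ρ u := by
  refine le_of_forall_mul_integral_lt le_rfl (continuous_dickmanMinorant ha.ne').continuousOn
    (hρ.1.mono Icc_subset_Ici_self) (fun v hv ↦ hρ.2.1 v hv.1)
    (fun v hv ↦ (dickmanMinorant_le_one ha hv.1).trans_eq (hρ.2.2.1 v hv).symm)
    (fun v hv ↦ ?_) ⟨hu, le_rfl⟩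
  rw [← hρ.mul_eq_integral hv.1.le]
  have hρv : 0 < ρ v := hρ.2.1 v (by linarith [hv.1])
  calc dickmanMinorant a v * (v * ρ v) = ρ v * (v * dickmanMinorant a v) := by ring
    _ < ρ v * ∫ s in (v - 1)..v, dickmanMinorant a s := by
      gcongr
      exact mul_dickmanMinorant_lt_integral ha hv.1.le (h.trans_le' (by gcongr; exact hv.2))

theorem IsDickman.le_dickmanMajorant (hρ : IsDickman ρ) (ha : 1 ≤ a) (hv₀ : 1 ≤ v₀)
    (h : exp a ≤ a * v₀) (hu : 0 ≤ u) : ρ u ≤ dickmanMajorant a v₀ u := by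
  have ha₀ : 0 < a := by linarith
  refine le_of_forall_mul_integral_lt hv₀ (hρ.1.mono Icc_subset_Ici_self)
    (continuous_dickmanMajorant ha₀.ne').continuousOn (fun v _ ↦ dickmanMajorant_pos _ _ _)
    (fun v hv ↦ (hρ.le_one hv.1).trans
      (one_le_dickmanMajorant ha₀ hv.1 hv.2 ((exp_le_exp.2 ha).trans h)))
    (fun v hv ↦ ?_) ⟨hu, le_rfl⟩
  have hv₁ : 1 < v := hv₀.trans_lt hv.1
  rw [← hρ.mul_eq_integral hv₁.le]
  have hρv : 0 < ρ v := hρ.2.1 v (by linarith)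
  calc ρ v * ∫ s in (v - 1)..v, dickmanMajorant a v₀ s < ρ v * (v * dickmanMajorant a v₀ v) := by
        gcongr
        exact integral_dickmanMajorant_lt_mul ha₀ hv₁ (h.trans (by gcongr; exact hv.1.le))
    _ = dickmanMajorant a v₀ v * (v * ρ v) := by ring

end Dickman

section Asymptotics

open Filter Topology

lemma log_dickmanMinorant_div_add {a u : ℝ} (ha : 0 < a) (hu : 0 < u) :
    log (dickmanMinorant a u) / u + log u + log a =
      1 + (1 + 1 / a) / u * log ((1 + 1 / a) / u) -
        (1 + (1 + 1 / a) / u) * log (1 + (1 + 1 / a) / u) := by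
  set r := (1 + 1 / a) / u with hr
  have hr₀ : 0 < r := by positivity
  have hβ : 1 + 1 / a = u * r := by rw [hr]; field_simp
  rw [dickmanMinorant, log_exp, hβ, logPrimitive, logPrimitive,
    show u + u * r = u * (1 + r) by ring, log_mul ha.ne' (by positivity),
    log_mul ha.ne' (by positivity), log_mul hu.ne' hr₀.ne', log_mul hu.ne' (by positivity)]
  field_simp
  ring

lemma log_dickmanMajorant_div_add {a u r : ℝ} (ha : 0 < a) (hu : 0 < u) (hr : 0 < r) :
    log (dickmanMajorant a (u * r) u) / u + log u + log a =
      1 + r * log r + r * (log (a * u) - 1) := by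
  rw [dickmanMajorant, log_exp, logPrimitive, logPrimitive, log_mul ha.ne' (by positivity),
    log_mul ha.ne' hu.ne', log_mul hu.ne' hr.ne']
  field_simp
  ring

variable {ι : Type*} {l : Filter ι} {a a' u : ι → ℝ}

lemma tendsto_log_dickmanMinorant_div_add (ha : ∀ᶠ i in l, 0 < a i) (hu : ∀ᶠ i in l, 0 < u i)
    (h : Tendsto (fun i ↦ (1 + 1 / a i) / u i) l (𝓝 0)) :
    Tendsto (fun i ↦ log (dickmanMinorant (a i) (u i)) / u i + log (u i) + log (a i)) l (𝓝 1) := by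
  have hlim : Tendsto (fun r : ℝ ↦ 1 + r * log r - (1 + r) * log (1 + r)) (𝓝 0) (𝓝 1) := by
    have hcont : Continuous fun r : ℝ ↦ 1 + r * log r - (1 + r) * log (1 + r) :=
      (continuous_mul_log.const_add 1).sub (continuous_mul_log.comp (continuous_const_add 1))
    simpa using hcont.tendsto 0
  refine (hlim.comp h).congr' ?_
  filter_upwards [ha, hu] with i hai hui
  exact (log_dickmanMinorant_div_add hai hui).symm

lemma tendsto_log_dickmanMajorant_div_add (hu : ∀ᶠ i in l, 0 < u i)
    (h : Tendsto (fun i ↦ a i * u i) l atTop) :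
    Tendsto (fun i ↦ log (dickmanMajorant (a i) (u i / log (a i * u i) ^ 2) (u i)) / u i +
      log (u i) + log (a i)) l (𝓝 1) := by
  have hlim : Tendsto (fun x : ℝ ↦ 1 + (x ^ 2)⁻¹ * log (x ^ 2)⁻¹ + (x⁻¹ - (x ^ 2)⁻¹))
      atTop (𝓝 1) := by
    have hinv : Tendsto (fun x : ℝ ↦ (x ^ 2)⁻¹) atTop (𝓝 0) :=
      tendsto_inv_atTop_zero.comp (tendsto_pow_atTop two_ne_zero)
    have hmul : Tendsto (fun x : ℝ ↦ (x ^ 2)⁻¹ * log (x ^ 2)⁻¹) atTop (𝓝 0) := by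
      have h₀ := (continuous_mul_log.tendsto 0).comp hinv
      rwa [zero_mul] at h₀
    simpa using (hmul.const_add 1).add (tendsto_inv_atTop_zero.sub hinv)
  have hlog : Tendsto (fun i ↦ log (a i * u i)) l atTop := tendsto_log_atTop.comp h
  refine (hlim.comp hlog).congr' ?_
  filter_upwards [hu, h.eventually_gt_atTop 0, hlog.eventually_gt_atTop 0] with i hui haui hli
  have hai : 0 < a i := pos_of_mul_pos_left haui hui.le
  rw [div_eq_mul_inv (u i), log_dickmanMajorant_div_add hai hui (by positivity)]
  simp only [Function.comp_apply]
  field_simp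

theorem tendsto_log_div_add_of_bounds {y c : ι → ℝ} (hy : ∀ᶠ i in l, 0 < y i)
    (hu : ∀ᶠ i in l, 0 < u i) (ha : ∀ᶠ i in l, 0 < a i)
    (hlower : ∀ᶠ i in l, dickmanMinorant (a i) (u i) ≤ y i)
    (hupper : ∀ᶠ i in l, y i ≤ dickmanMajorant (a' i) (u i / log (a' i * u i) ^ 2) (u i))
    (hau : Tendsto (fun i ↦ (1 + 1 / a i) / u i) l (𝓝 0))
    (hau' : Tendsto (fun i ↦ a' i * u i) l atTop)
    (hac : Tendsto (fun i ↦ log (a i) - c i) l (𝓝 0))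
    (hac' : Tendsto (fun i ↦ log (a' i) - c i) l (𝓝 0)) :
    Tendsto (fun i ↦ log (y i) / u i + log (u i) + c i) l (𝓝 1) := by
  have h₁ := (tendsto_log_dickmanMinorant_div_add ha hu hau).sub hac
  have h₂ := (tendsto_log_dickmanMajorant_div_add hu hau').sub hac'
  rw [sub_zero] at h₁ h₂
  refine tendsto_of_tendsto_of_tendsto_of_le_of_le' h₁ h₂ ?_ ?_
  · filter_upwards [hu, hlower] with i hui hi
    have := div_le_div_of_nonneg_right (log_le_log (dickmanMinorant_pos _ _) hi) hui.le
    linarith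
  · filter_upwards [hy, hu, hupper] with i hyi hui hi
    have := div_le_div_of_nonneg_right (log_le_log hyi hi) hui.le
    linarith

lemma tendsto_add_mul_log_div (θ : ℝ) : Tendsto (fun x ↦ (x + θ * log x) / x) atTop (𝓝 1) := by
  have h := (isLittleO_log_id_atTop.tendsto_div_nhds_zero.const_mul θ).const_add 1
  rw [mul_zero, add_zero] at h
  refine h.congr' ?_
  filter_upwards [eventually_ne_atTop 0] with x hx
  simp only [id]
  field_simp

lemma tendsto_add_mul_log_atTop (θ : ℝ) : Tendsto (fun x ↦ x + θ * log x) atTop atTop := by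
  refine ((tendsto_add_mul_log_div θ).pos_mul_atTop one_pos tendsto_id).congr' ?_
  filter_upwards [eventually_ne_atTop 0] with x hx
  simp only [id]
  field_simp

lemma tendsto_log_add_mul_log_sub_log (θ : ℝ) :
    Tendsto (fun x ↦ log (x + θ * log x) - log x) atTop (𝓝 0) := by
  have h := ((continuousAt_log one_ne_zero).tendsto.comp (tendsto_add_mul_log_div θ))
  rw [log_one] at h
  refine h.congr' ?_
  filter_upwards [eventually_gt_atTop 0, (tendsto_add_mul_log_atTop θ).eventually_gt_atTop 0]
    with x hx hy
  exact log_div hy.ne' hx.ne'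

lemma tendsto_div_log_pow_atTop (k : ℕ) : Tendsto (fun x : ℝ ↦ x / log x ^ k) atTop atTop := by
  have h : Tendsto (fun x : ℝ ↦ log x ^ k / x) atTop (𝓝[>] 0) := by
    refine tendsto_nhdsWithin_iff.2 ⟨isLittleO_pow_log_id_atTop.tendsto_div_nhds_zero, ?_⟩
    filter_upwards [eventually_gt_atTop (1 : ℝ)] with x hx
    exact div_pos (pow_pos (log_pos hx) k) (by linarith)
  exact h.inv_tendsto_nhdsGT_zero.congr fun x ↦ inv_div _ _

lemma exp_log_add_neg_three_mul_log_log {x : ℝ} (hx : 1 < x) :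
    exp (log x + -3 * log (log x)) = x / log x ^ 3 := by
  have hpow := exp_nat_mul (log (log x)) 3
  rw [exp_log (log_pos hx)] at hpow
  rw [neg_mul, ← sub_eq_add_neg, exp_sub, exp_log (by linarith), ← hpow, Nat.cast_ofNat]

lemma eventually_dickmanMinorant_le : ∀ᶠ u : ℝ in atTop, ∀ ρ, IsDickman ρ →
    dickmanMinorant (log u + 2 * log (log u)) u ≤ ρ u := by
  filter_upwards [eventually_gt_atTop 1, tendsto_log_atTop.eventually_ge_atTop 4]
    with u hu hL ρ hρ
  have hL₀ : 0 < log u := by linarith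
  have hl₀ : 0 ≤ log (log u) := log_nonneg (by linarith)
  have hl : log (log u) ≤ log u - 1 := log_le_sub_one_of_pos hL₀
  refine hρ.dickmanMinorant_le (by positivity) (by linarith) ?_
  rw [exp_add, exp_log (by linarith), two_mul, exp_add, exp_log hL₀]
  have hlin : log u + (log (log u) + log (log u)) + 1 ≤ log u * log u := by nlinarith
  nlinarith [mul_le_mul_of_nonneg_right hlin (by linarith : 0 ≤ u)]

lemma eventually_le_dickmanMajorant : ∀ᶠ u : ℝ in atTop, ∀ ρ, IsDickman ρ →
    ρ u ≤ dickmanMajorant (log u + -3 * log (log u))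
      (u / log ((log u + -3 * log (log u)) * u) ^ 2) u := by
  filter_upwards [eventually_gt_atTop 1, tendsto_log_atTop.eventually_ge_atTop 4,
    (tendsto_div_log_pow_atTop 2).eventually_ge_atTop 4,
    ((tendsto_add_mul_log_atTop (-3)).comp tendsto_log_atTop).eventually_ge_atTop 1]
    with u hu hL hu₂ ha ρ hρ
  simp only [Function.comp_apply] at ha
  set a := log u + -3 * log (log u)
  have hu₀ : 0 < u := by linarith
  have ha₀ : 0 < a := by linarith
  have haL : a ≤ log u := by linarith [log_nonneg (by linarith : 1 ≤ log u)]
  have hℓ : 0 < log (a * u) := log_pos (by nlinarith)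
  have hℓL : log (a * u) ≤ 2 * log u := by
    rw [log_mul ha₀.ne' hu₀.ne']
    linarith [log_le_sub_one_of_pos ha₀]
  have hℓ₂ : log (a * u) ^ 2 ≤ 4 * log u ^ 2 := by nlinarith
  rw [le_div_iff₀ (by positivity)] at hu₂
  refine hρ.le_dickmanMajorant ha ((one_le_div (by positivity)).2 (hℓ₂.trans hu₂)) ?_ hu₀.le
  rw [exp_log_add_neg_three_mul_log_log hu, ← mul_div_assoc,
    div_le_div_iff₀ (by positivity) (by positivity)]
  calc u * log (a * u) ^ 2 ≤ u * log u ^ 3 := by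
        gcongr
        nlinarith
    _ ≤ a * u * log u ^ 3 := by
        gcongr
        exact le_mul_of_one_le_left hu₀.le ha

theorem tendsto_log_isDickman_div_add :
    Tendsto (fun p : ℝ × (ℝ → ℝ) ↦ log (p.2 p.1) / p.1 + log p.1 + log (log p.1))
      (atTop ×ˢ 𝓟 {ρ | IsDickman ρ}) (𝓝 1) := by
  have hlift {P : ℝ → (ℝ → ℝ) → Prop} (h : ∀ᶠ u : ℝ in atTop, ∀ ρ, IsDickman ρ → P u ρ) :
      ∀ᶠ p : ℝ × (ℝ → ℝ) in atTop ×ˢ 𝓟 {ρ | IsDickman ρ}, P p.1 p.2 :=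
    eventually_prod_principal_iff.2 h
  have hfst : Tendsto (Prod.fst : ℝ × (ℝ → ℝ) → ℝ) (atTop ×ˢ 𝓟 {ρ | IsDickman ρ}) atTop :=
    tendsto_fst
  have hlog := tendsto_log_atTop.comp hfst
  have hmin := (tendsto_add_mul_log_atTop 2).comp hlog
  have hmaj := (tendsto_add_mul_log_atTop (-3)).comp hlog
  have hpos : ∀ᶠ u : ℝ in atTop, ∀ ρ, IsDickman ρ → 0 < ρ u := by
    filter_upwards [eventually_ge_atTop 0] with u hu ρ hρ
    exact hρ.2.1 u hu
  refine tendsto_log_div_add_of_bounds (hlift hpos) (hfst.eventually_gt_atTop 0)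
    (hmin.eventually_gt_atTop 0) (hlift eventually_dickmanMinorant_le)
    (hlift eventually_le_dickmanMajorant) ?_ (hmaj.atTop_mul_atTop₀ hfst)
    ((tendsto_log_add_mul_log_sub_log 2).comp hlog)
    ((tendsto_log_add_mul_log_sub_log (-3)).comp hlog)
  simpa using ((tendsto_inv_atTop_zero.comp hmin).const_add 1).div_atTop hfst

end Asymptotics

section FriableScale

variable {m s : ℝ}

/-- The number `a = m * (1 - exp (-s / m))`, characterised by `(1 - a / m) ^ m = exp (-s)`. It plays
for `m`-friable permutations the role of `s` itself for the Dickman function, which is the limiting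
case `m → ∞`. -/
noncomputable def friableScale (m s : ℝ) : ℝ := m * (1 - exp (-(s / m)))

lemma friableScale_pos (hm : 0 < m) (hs : 0 < s) : 0 < friableScale m s :=
  mul_pos hm (sub_pos.2 (exp_lt_one_iff.2 (neg_neg_of_pos (div_pos hs hm))))

lemma friableScale_le_friableScale {t : ℝ} (hm : 0 ≤ m) (hst : s ≤ t) :
    friableScale m s ≤ friableScale m t := by
  unfold friableScale
  gcongr

lemma friableScale_le (hm : 0 ≤ m) (s : ℝ) : friableScale m s ≤ m :=
  mul_le_of_le_one_right hm (sub_le_self _ (exp_pos _).le)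

lemma one_sub_friableScale_div_pow {m : ℕ} (hm : m ≠ 0) (s : ℝ) :
    (1 - friableScale m s / m) ^ m = exp (-s) := by
  have hm₀ : (m : ℝ) ≠ 0 := mod_cast hm
  rw [friableScale, mul_div_cancel_left₀ _ hm₀, sub_sub_cancel, ← exp_nat_mul]
  field_simp

lemma mul_one_sub_exp_le_friableScale {A : ℝ} (hm : 0 < m) (hA : 0 < A) (h : m ≤ A * s) :
    m * (1 - exp (-A⁻¹)) ≤ friableScale m s := by
  have : A⁻¹ ≤ s / m := by rwa [inv_eq_one_div, div_le_div_iff₀ hA hm, one_mul, mul_comm]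
  unfold friableScale
  gcongr

lemma div_mul_friableScale_le {t : ℝ} (hm : 0 ≤ m) (hs : 0 ≤ s) (hst : s ≤ t) :
    s / t * friableScale m t ≤ friableScale m s := by
  have hr₀ : 0 ≤ s / t := div_nonneg hs (hs.trans hst)
  have hr₁ : s / t ≤ 1 := div_le_one_of_le₀ hst (hs.trans hst)
  have hconv := convexOn_exp.2 (Set.mem_univ (-(t / m))) (Set.mem_univ 0) hr₀ (sub_nonneg.2 hr₁)
    (add_sub_cancel _ _)
  have harg : s / t * (t / m) = s / m := by
    rcases eq_or_ne t 0 with rfl | ht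
    · simp [le_antisymm hst hs]
    · field_simp
  simp only [smul_eq_mul, mul_neg, harg, mul_zero, add_zero, exp_zero, mul_one] at hconv
  calc s / t * friableScale m t = m * (s / t * (1 - exp (-(t / m)))) := by
        rw [friableScale]
        ring
    _ ≤ m * (1 - exp (-(s / m))) := by
        gcongr
        linarith

theorem dickmanMinorant_friableScale_le_permProb {m n : ℕ} (hm : 1 ≤ m) (hs : 0 < s)
    (h : friableScale m s * (n / m) + 1 ≤ exp s) :
    dickmanMinorant (friableScale m s) (n / m) ≤ permProb n m := by
  have hm₀ : (0 : ℝ) < m := mod_cast hm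
  refine dickmanMinorant_le_permProb hm (friableScale_pos hm₀ hs) (friableScale_le hm₀.le s) ?_
  rwa [one_sub_friableScale_div_pow (by omega), exp_neg, inv_mul_le_one₀ (exp_pos s)]

theorem permProb_le_dickmanMajorant_friableScale {m : ℕ} {v₀ : ℝ} (hm : 1 ≤ m) (hs : 1 ≤ s)
    (hv₀ : 1 ≤ v₀) (h : exp s ≤ friableScale m s * v₀) (n : ℕ) :
    permProb n m ≤ dickmanMajorant (friableScale m s) v₀ (n / m) := by
  have hm₀ : (0 : ℝ) < m := mod_cast hm
  refine permProb_le_dickmanMajorant hm (friableScale_pos hm₀ (by linarith))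
    (friableScale_le hm₀.le s) hv₀ ((exp_le_exp.2 hs).trans h) ?_ n
  rwa [one_sub_friableScale_div_pow (by omega), exp_neg, one_le_inv_mul₀ (exp_pos s)]

end FriableScale

section FriableFilter

open Filter Topology

variable {A : ℝ}

/-- The filter of pairs `(n, m)` with `n → ∞` and `1 ≤ m ≤ A * log n`: a limit along it is a limit
as `n → ∞`, uniform in such `m`. -/
def friableFilter (A : ℝ) : Filter (ℕ × ℕ) :=
  comap Prod.fst atTop ⊓ 𝓟 {p | 1 ≤ p.2 ∧ (p.2 : ℝ) ≤ A * log p.1}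

lemma eventually_friableFilter_iff {P : ℕ × ℕ → Prop} :
    (∀ᶠ p in friableFilter A, P p) ↔
      ∃ N : ℕ, ∀ n : ℕ, N ≤ n → ∀ m : ℕ, 1 ≤ m → (m : ℝ) ≤ A * log n → P (n, m) := by
  simp only [friableFilter, eventually_inf_principal, eventually_comap, eventually_atTop]
  exact ⟨fun ⟨N, hN⟩ ↦ ⟨N, fun n hn m hm hmA ↦ hN n hn (n, m) rfl ⟨hm, hmA⟩⟩,
    fun ⟨N, hN⟩ ↦ ⟨N, fun _ hn p hp hpA ↦ hN p.1 (hn.trans_eq hp.symm) p.2 hpA.1 hpA.2⟩⟩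

lemma eventually_mem_friableFilter (A : ℝ) :
    ∀ᶠ p in friableFilter A, 1 ≤ p.2 ∧ (p.2 : ℝ) ≤ A * log p.1 :=
  mem_inf_of_right (mem_principal_self _)

lemma tendsto_fst_friableFilter (A : ℝ) :
    Tendsto (fun p : ℕ × ℕ ↦ (p.1 : ℝ)) (friableFilter A) atTop :=
  tendsto_natCast_atTop_atTop.comp (tendsto_comap.mono_left inf_le_left)

lemma tendsto_log_fst_friableFilter (A : ℝ) :
    Tendsto (fun p : ℕ × ℕ ↦ log p.1) (friableFilter A) atTop :=
  tendsto_log_atTop.comp (tendsto_fst_friableFilter A)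

lemma tendsto_div_log_pow_friableFilter (hA : 0 < A) (k : ℕ) :
    Tendsto (fun p : ℕ × ℕ ↦ (p.1 / p.2 : ℝ) / log p.1 ^ k) (friableFilter A) atTop := by
  refine tendsto_atTop_mono' _ ?_ (((tendsto_div_log_pow_atTop (k + 1)).comp
    (tendsto_fst_friableFilter A)).const_mul_atTop (inv_pos.2 hA))
  filter_upwards [eventually_mem_friableFilter A,
    (tendsto_log_fst_friableFilter A).eventually_gt_atTop 0] with ⟨n, m⟩ ⟨hm, hmA⟩ hL
  have : (0 : ℝ) < m := mod_cast hm
  calc A⁻¹ * (n / log n ^ (k + 1)) = n / (A * log n) / log n ^ k := by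
        rw [pow_succ]
        field_simp
    _ ≤ n / m / log n ^ k := by gcongr

lemma tendsto_div_friableFilter (hA : 0 < A) :
    Tendsto (fun p : ℕ × ℕ ↦ (p.1 / p.2 : ℝ)) (friableFilter A) atTop := by
  simpa using tendsto_div_log_pow_friableFilter hA 0

lemma eventually_le_friableScale (hA : 0 < A) (θ : ℝ) : ∀ᶠ p in friableFilter A,
    p.2 * (1 - exp (-(2 * A)⁻¹)) ≤ friableScale p.2 (log p.1 + θ * log (log p.1)) := by
  have hlog := tendsto_log_fst_friableFilter A
  filter_upwards [eventually_mem_friableFilter A, hlog.eventually_gt_atTop 0,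
    ((tendsto_add_mul_log_div θ).comp hlog).eventually_const_le one_half_lt_one]
    with ⟨n, m⟩ ⟨hm, hmA⟩ hL hM
  simp only [Function.comp_apply, le_div_iff₀ hL] at hM
  refine mul_one_sub_exp_le_friableScale (mod_cast hm) (by positivity) (hmA.trans ?_)
  nlinarith

lemma one_sub_exp_neg_inv_pos (hA : 0 < A) : 0 < 1 - exp (-A⁻¹) :=
  sub_pos.2 (exp_lt_one_iff.2 (neg_neg_of_pos (inv_pos.2 hA)))

lemma tendsto_friableScale_mul_div (hA : 0 < A) (θ : ℝ) : Tendsto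
    (fun p : ℕ × ℕ ↦ friableScale p.2 (log p.1 + θ * log (log p.1)) * (p.1 / p.2 : ℝ))
    (friableFilter A) atTop := by
  have hc := one_sub_exp_neg_inv_pos (by positivity : 0 < 2 * A)
  refine tendsto_atTop_mono' _ ?_ ((tendsto_fst_friableFilter A).const_mul_atTop hc)
  filter_upwards [eventually_mem_friableFilter A, eventually_le_friableScale hA θ]
    with ⟨n, m⟩ ⟨hm, _⟩ hφ
  have : (0 : ℝ) < m := mod_cast hm
  calc (1 - exp (-(2 * A)⁻¹)) * n = m * (1 - exp (-(2 * A)⁻¹)) * (n / m) := by field_simp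
    _ ≤ _ := by gcongr

lemma tendsto_one_add_inv_friableScale_div (hA : 0 < A) :
    Tendsto (fun p : ℕ × ℕ ↦ (1 + 1 / friableScale p.2 (log p.1)) / (p.1 / p.2 : ℝ))
      (friableFilter A) (𝓝 0) := by
  have hu := tendsto_div_friableFilter hA
  have hprod := tendsto_friableScale_mul_div hA 0
  simp only [zero_mul, add_zero] at hprod
  refine (add_zero (0 : ℝ) ▸
    (tendsto_inv_atTop_zero.comp hu).add (tendsto_inv_atTop_zero.comp hprod)).congr fun p ↦ ?_
  simp only [Function.comp_apply, mul_inv]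
  ring

lemma tendsto_log_friableScale_sub_log (A : ℝ) {θ : ℝ} (hθ : θ ≤ 0) : Tendsto
    (fun p : ℕ × ℕ ↦ log (friableScale p.2 (log p.1 + θ * log (log p.1))) -
      log (friableScale p.2 (log p.1))) (friableFilter A) (𝓝 0) := by
  have hlog := tendsto_log_fst_friableFilter A
  refine tendsto_of_tendsto_of_tendsto_of_le_of_le'
    ((tendsto_log_add_mul_log_sub_log θ).comp hlog) tendsto_const_nhds ?_ ?_
  all_goals
    filter_upwards [eventually_mem_friableFilter A, hlog.eventually_ge_atTop 1,
      ((tendsto_add_mul_log_atTop θ).comp hlog).eventually_gt_atTop 0] with ⟨n, m⟩ ⟨hm, _⟩ hL hM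
    have hm₀ : (0 : ℝ) < m := mod_cast hm
    have hML : log n + θ * log (log n) ≤ log n := by nlinarith [log_nonneg hL]
    have hφL := friableScale_pos hm₀ (by linarith : 0 < log n)
    have hφM := friableScale_pos hm₀ hM
    simp only [Function.comp_apply] at *
  · have h := log_le_log (by positivity) (div_mul_friableScale_le hm₀.le hM.le hML)
    rw [log_mul (by positivity) hφL.ne', log_div hM.ne' (by positivity)] at h
    linarith
  · rw [sub_nonpos]
    exact log_le_log hφM (friableScale_le_friableScale hm₀.le hML)

lemma eventually_dickmanMinorant_le_permProb (A : ℝ) : ∀ᶠ p in friableFilter A,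
    dickmanMinorant (friableScale p.2 (log p.1)) (p.1 / p.2) ≤ permProb p.1 p.2 := by
  filter_upwards [eventually_mem_friableFilter A,
    (tendsto_fst_friableFilter A).eventually_gt_atTop 1] with ⟨n, m⟩ ⟨hm, _⟩ hn
  have hL : 0 < log n := log_pos hn
  have hn₀ : (0 : ℝ) < n := by linarith
  have : (0 : ℝ) < m := mod_cast hm
  refine dickmanMinorant_friableScale_le_permProb hm hL ?_
  have hexp : 1 ≤ n * exp (-(log n / m)) := by
    rw [← exp_log hn₀, ← exp_add, one_le_exp_iff, log_exp, ← sub_eq_add_neg, sub_nonneg]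
    exact div_le_self hL.le (mod_cast hm)
  rw [exp_log hn₀, friableScale]
  field_simp
  linarith

/- The shift of `s` by `-3 * log (log n)` gains a factor `(log n) ^ 3`: two powers pay for taking
`v₀` smaller than `u` by a squared logarithm, and the third absorbs a constant depending on `A`. -/
lemma eventually_permProb_le_dickmanMajorant (hA : 0 < A) : ∀ᶠ p in friableFilter A,
    permProb p.1 p.2 ≤ dickmanMajorant (friableScale p.2 (log p.1 + -3 * log (log p.1)))
      (p.1 / p.2 / log (friableScale p.2 (log p.1 + -3 * log (log p.1)) * (p.1 / p.2)) ^ 2)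
      (p.1 / p.2) := by
  have hlog := tendsto_log_fst_friableFilter A
  have hc := one_sub_exp_neg_inv_pos (by positivity : 0 < 2 * A)
  filter_upwards [eventually_mem_friableFilter A,
    (tendsto_fst_friableFilter A).eventually_gt_atTop 1, hlog.eventually_ge_atTop 1,
    (hlog.const_mul_atTop hc).eventually_ge_atTop 1,
    ((tendsto_add_mul_log_atTop (-3)).comp hlog).eventually_ge_atTop 1,
    (tendsto_div_log_pow_friableFilter hA 2).eventually_ge_atTop 1,
    (tendsto_friableScale_mul_div hA (-3)).eventually_gt_atTop 1,
    eventually_le_friableScale hA (-3)] with ⟨n, m⟩ ⟨hm, _⟩ hn hL hcL hM hu hφu hφ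
  simp only [Function.comp_apply] at *
  have hm₀ : (0 : ℝ) < m := mod_cast hm
  have hn₀ : (0 : ℝ) < n := by linarith
  set φ := friableScale m (log n + -3 * log (log n))
  have hℓ : 0 < log (φ * (n / m)) := log_pos hφu
  have hℓL : log (φ * (n / m)) ≤ log n := by
    refine log_le_log (by linarith) ?_
    calc φ * (n / m) ≤ m * (n / m) := by gcongr; exact friableScale_le hm₀.le _
      _ = n := by field_simp
  rw [le_div_iff₀ (by positivity), one_mul] at hu
  refine permProb_le_dickmanMajorant_friableScale hm hM
    ((one_le_div (by positivity)).2 (hu.trans' (by gcongr))) ?_ n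
  rw [exp_log_add_neg_three_mul_log_log hn, ← mul_div_assoc,
    div_le_div_iff₀ (by positivity) (by positivity)]
  calc n * log (φ * (n / m)) ^ 2 ≤ n * log n ^ 2 := by gcongr
    _ ≤ n * log n ^ 2 * ((1 - exp (-(2 * A)⁻¹)) * log n) :=
        le_mul_of_one_le_right (by positivity) hcL
    _ = m * (1 - exp (-(2 * A)⁻¹)) * (n / m) * log n ^ 3 := by field_simp
    _ ≤ φ * (n / m) * log n ^ 3 := by gcongr

theorem tendsto_log_permProb_div_add (hA : 0 < A) :
    Tendsto (fun p : ℕ × ℕ ↦ log (permProb p.1 p.2) / (p.1 / p.2) + log (p.1 / p.2) +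
      log (friableScale p.2 (log p.1))) (friableFilter A) (𝓝 1) := by
  have hu := tendsto_div_friableFilter hA
  refine tendsto_log_div_add_of_bounds (.of_forall fun p ↦ permProb_pos p.1 p.2)
    (hu.eventually_gt_atTop 0) ?_ (eventually_dickmanMinorant_le_permProb A)
    (eventually_permProb_le_dickmanMajorant hA) (tendsto_one_add_inv_friableScale_div hA)
    (tendsto_friableScale_mul_div hA (-3)) (by simpa using tendsto_const_nhds)
    (tendsto_log_friableScale_sub_log A (by norm_num))
  filter_upwards [eventually_mem_friableFilter A,
    (tendsto_log_fst_friableFilter A).eventually_gt_atTop 0] with p hp hL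
  exact friableScale_pos (mod_cast hp.1) hL

lemma tendsto_log_log_div_sub_log_log (hA : 0 < A) :
    Tendsto (fun p : ℕ × ℕ ↦ log (log (p.1 / p.2)) - log (log p.1)) (friableFilter A) (𝓝 0) := by
  have hlog := tendsto_log_fst_friableFilter A
  refine tendsto_of_tendsto_of_tendsto_of_le_of_le'
    ((tendsto_log_add_mul_log_sub_log (-2)).comp hlog) tendsto_const_nhds ?_ ?_
  all_goals
    filter_upwards [eventually_mem_friableFilter A, hlog.eventually_ge_atTop (max 1 A),
      ((tendsto_add_mul_log_atTop (-2)).comp hlog).eventually_gt_atTop 0,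
      (tendsto_fst_friableFilter A).eventually_gt_atTop 0] with ⟨n, m⟩ ⟨hm, hmA⟩ hL hM hn
    simp only [Function.comp_apply, max_le_iff, sub_nonpos] at *
    have hm₀ : (0 : ℝ) < m := mod_cast hm
    have hlogm₀ : 0 ≤ log m := log_nonneg (mod_cast hm)
    have hlogm : log m ≤ 2 * log (log n) := by
      rw [← log_rpow (by linarith), rpow_two]
      exact log_le_log hm₀ (hmA.trans (by nlinarith))
    rw [log_div hn.ne' hm₀.ne']
  · exact sub_le_sub_right (log_le_log hM (by linarith)) _
  · exact log_le_log (by linarith) (by linarith)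

theorem tendsto_log_permProb_div_isDickman_sub (hA : 0 < A) :
    Tendsto (fun q : (ℕ × ℕ) × (ℝ → ℝ) ↦
      1 / (q.1.1 / q.1.2) * log (permProb q.1.1 q.1.2 / q.2 (q.1.1 / q.1.2)) -
        log (log q.1.1 / q.1.2 / (1 - exp (-(log q.1.1 / q.1.2)))))
      (friableFilter A ×ˢ 𝓟 {ρ | IsDickman ρ}) (𝓝 0) := by
  have hfst : Tendsto Prod.fst (friableFilter A ×ˢ 𝓟 {ρ | IsDickman ρ}) (friableFilter A) :=
    tendsto_fst
  have hperm := (tendsto_log_permProb_div_add hA).comp hfst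
  have hρ := tendsto_log_isDickman_div_add.comp ((tendsto_div_friableFilter hA).prodMap tendsto_id)
  have hlog := (tendsto_log_log_div_sub_log_log hA).comp hfst
  have hlim := (hperm.sub hρ).add hlog
  rw [sub_self, add_zero] at hlim
  refine hlim.congr' (eventually_prod_principal_iff.2 ?_)
  filter_upwards [eventually_mem_friableFilter A,
    (tendsto_log_fst_friableFilter A).eventually_gt_atTop 0] with ⟨n, m⟩ ⟨hm, _⟩ hL ρ hρ
  have hφ : 0 < friableScale m (log n) := friableScale_pos (mod_cast hm) hL
  have hscale : log n / m / (1 - exp (-(log n / m))) = log n / friableScale m (log n) :=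
    div_div _ _ _
  have hρu : 0 < ρ (n / m) := hρ.2.1 _ (by positivity)
  simp only [Function.comp_apply, Prod.map, id]
  rw [hscale, log_div (permProb_pos n m).ne' hρu.ne', log_div hL.ne' hφ.ne']
  ring

end FriableFilter

/-- For every `A > 0` and `ε > 0` there exists `N` such that for all `n ≥ N`
and `1 ≤ m ≤ min{n, A·log n}`, writing `u = n/m` and `t = (log n)/m`, one has
`|(1/u)·log(p_{n,m}/ρ(u)) − log(t/(1 − e^{−t}))| ≤ ε`. -/
theorem stmt7 :
    ∀ A : ℝ, 0 < A → ∀ ε : ℝ, 0 < ε → ∃ N : ℕ, ∀ n : ℕ, N ≤ n →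
      ∀ m : ℕ, 1 ≤ m → m ≤ n → (m : ℝ) ≤ A * Real.log n →
      ∀ ρ : ℝ → ℝ, IsDickman ρ →
      ∀ u t : ℝ, u = (n : ℝ) / (m : ℝ) → t = Real.log n / (m : ℝ) →
      |(1 / u) * Real.log (permProb n m / ρ u) -
          Real.log (t / (1 - Real.exp (-t)))| ≤ ε := by
  intro A hA ε hε
  have hlim := (tendsto_log_permProb_div_isDickman_sub hA).eventually
    (Metric.closedBall_mem_nhds 0 hε)
  obtain ⟨N, hN⟩ := eventually_friableFilter_iff.1 (Filter.eventually_prod_principal_iff.1 hlim)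
  refine ⟨N, fun n hn m hm _ hmA ρ hρ u t hu ht ↦ ?_⟩
  subst hu ht
  simpa only [Metric.mem_closedBall, Real.dist_0_eq_abs] using hN n hn m hm hmA ρ hρ
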